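/- Let Ψ be either the class of all forests or the class of all bipartite graphs, let α, β be reals with 2 < α ≤ 3 and 4α − β = 6, and let G be a minimal counterexample for Ψ, α, β. If S is a vertex cut of G with |S| ≤ 4, then the induced subgraph G[S] is isomorphic to T0 or to T1. -/

import Mathlib

/-!
For a cut `S` with sides `L` and `R`, the parts `G[S ∪ L]` and `G[S ∪ R]` have fewer vertices than
the minimal counterexample `G`, so each of them is either too dense for the hypothesis of
minimality (not `Sparse`) or has a `Ψ`-cut. A `Ψ`-cut of a part must separate two vertices of `S`,
since otherwise it would be a `Ψ`-cut of `G` (`exists_separating`). The same applies to the parts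
after some missing edges inside `S` have been inserted. In particular a part is never sparse once
`S` has been completed to a clique (`not_sparse_of_clique`). On the other hand, the edge numbers of
the two parts add up to `e(G) + e(S)`, and positive quality of `G` bounds this sum (`sum_lt`).

These facts exclude the following cuts.

* `K₃` and `K₄` (`not_clique`): both parts are dense, against the bound; `α ≤ 3` is needed for `K₃`.
* The diamond (`not_diamond`): if one part were dense, the bound would fail after inserting the
  missing edge into the other part. So both parts have `Ψ`-cuts; both contain the ends of the
  central edge and separate the other two vertices, and two forests (or two bipartite graphs)
  glued along an edge are a forest (or bipartite).
* The 4-cycle, for forests (`not_cycle`): by the count some part remains sparse after one diagonal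
  is inserted, and the other part is sparse as it is. A forest cut of the latter contains the ends
  of one diagonal `ab`; inserting `ab` in the former yields a forest cut containing the edge `ab`.
  The two cuts glue along `a, b` because one of them stays a forest with `ab` present
  (`acyclic_glue`).

A graph on at most four vertices that is not a forest contains a triangle or a 4-cycle, and an
induced 4-cycle is bipartite. After the exclusions only a triangle and a fourth vertex with at most
one neighbour in it are left, which is `T0` or `T1`.
-/

open SimpleGraph

/-- `M` is a vertex cut of `G`: the complement of `M` can be partitioned into two nonempty
sets `L`, `R` with no edge of `G` joining a vertex of `L` to a vertex of `R`. -/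
def IsVertexCut {V : Type*} (G : SimpleGraph V) (M : Set V) : Prop :=
  ∃ L R : Set V, L.Nonempty ∧ R.Nonempty ∧ Disjoint L R ∧ L ∪ R = Mᶜ ∧
    ∀ x ∈ L, ∀ y ∈ R, ¬ G.Adj x y

/-- `(M, L, R)` is a separation of `G`. -/
def IsSeparation {V : Type*} (G : SimpleGraph V) (M L R : Set V) : Prop :=
  L.Nonempty ∧ R.Nonempty ∧ M ∪ L ∪ R = Set.univ ∧
  Disjoint M L ∧ Disjoint M R ∧ Disjoint L R ∧
  ∀ x ∈ L, ∀ y ∈ R, ¬ G.Adj x y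

/-- The quality function `q_{α,β}(G) = α|V(G)| − |E(G)| − β`. -/
noncomputable def quality {V : Type*} (α β : ℝ) (G : SimpleGraph V) : ℝ :=
  α * Nat.card V - Nat.card G.edgeSet - β

/-- degree of a vertex as the cardinality of its neighbor set. -/
noncomputable def vdeg {V : Type*} (G : SimpleGraph V) (v : V) : ℕ :=
  (G.neighborSet v).ncard

/-- The class of forests. -/
def ForestClass : ∀ (W : Type), SimpleGraph W → Prop := fun _ H => H.IsAcyclic

/-- The class of bipartite graphs. -/
def BipartiteClass : ∀ (W : Type), SimpleGraph W → Prop := fun _ H => H.Colorable 2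

/-- `G` has a `Ψ`-cut: a vertex cut whose induced subgraph lies in `Ψ`. -/
def HasPsiCut (Ψ : ∀ (W : Type), SimpleGraph W → Prop) {V : Type} (G : SimpleGraph V) : Prop :=
  ∃ M : Set V, IsVertexCut G M ∧ Ψ ↥M (G.induce M)

/-- `G` has a forest cut. -/
def HasForestCut {V : Type*} (G : SimpleGraph V) : Prop :=
  ∃ M : Set V, IsVertexCut G M ∧ (G.induce M).IsAcyclic

/-- `G` has a bipartite cut. -/
def HasBipartiteCut {V : Type*} (G : SimpleGraph V) : Prop :=
  ∃ M : Set V, IsVertexCut G M ∧ (G.induce M).Colorable 2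

/-- `G` has an independent cut. -/
def HasIndependentCut {V : Type*} (G : SimpleGraph V) : Prop :=
  ∃ M : Set V, IsVertexCut G M ∧ ∀ x ∈ M, ∀ y ∈ M, ¬ G.Adj x y

/-- `G` is a minimal counterexample for the class `Ψ` and parameters `α`, `β`. -/
def MinCounterexample (Ψ : ∀ (W : Type), SimpleGraph W → Prop) (α β : ℝ)
    {V : Type} (G : SimpleGraph V) : Prop :=
  4 ≤ Nat.card V ∧ 0 < quality α β G ∧ ¬ HasPsiCut Ψ G ∧
  ∀ (W : Type) (H : SimpleGraph W),
    4 ≤ Nat.card W → Nat.card W < Nat.card V → 0 < quality α β H → HasPsiCut Ψ H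

/-- `T0`: a triangle together with an isolated vertex. -/
def graphT0 : SimpleGraph (Fin 4) := SimpleGraph.fromEdgeSet {s(0,1), s(0,2), s(1,2)}

/-- `T1`: a triangle with an extra vertex joined to exactly one triangle vertex. -/
def graphT1 : SimpleGraph (Fin 4) := SimpleGraph.fromEdgeSet {s(0,1), s(0,2), s(1,2), s(2,3)}

/-- The diamond graph `K4` minus one edge. -/
def diamondGraph : SimpleGraph (Fin 4) := (⊤ : SimpleGraph (Fin 4)).deleteEdges {s(0,1)}

/-- Number of edges of `G` with one endpoint in `X` and the other outside `X`. -/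
noncomputable def crossEdges {V : Type*} (G : SimpleGraph V) (X : Set V) : ℕ :=
  {e : Sym2 V | e ∈ G.edgeSet ∧ ∃ x ∈ X, ∃ y ∉ X, e = s(x,y)}.ncard

/-! ### Gluing forests and bipartite graphs -/

/-- Both classes are closed under taking subgraphs. -/
theorem psi_hom {Ψ : ∀ (W : Type), SimpleGraph W → Prop}
    (hΨ : Ψ = ForestClass ∨ Ψ = BipartiteClass) {W W' : Type} {H : SimpleGraph W}
    {H' : SimpleGraph W'} (f : H' →g H) (hf : Function.Injective f) (h : Ψ W H) : Ψ W' H' := by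
  rcases hΨ with rfl | rfl
  · exact SimpleGraph.IsAcyclic.comap f hf h
  · exact SimpleGraph.Colorable.of_hom f h

/-- An induced subgraph is a forest iff each of its edges is the only edge leaving some
vertex set, i.e. iff each edge is a bridge. -/
theorem acyclic_iff_cuts {V : Type} (H : SimpleGraph V) (X : Set V) :
    (H.induce X).IsAcyclic ↔ ∀ u ∈ X, ∀ v ∈ X, H.Adj u v → ∃ A : Set V, u ∈ A ∧ v ∉ A ∧
      ∀ x ∈ X, ∀ y ∈ X, H.Adj x y → x ∈ A → y ∉ A → x = u ∧ y = v := by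
  rw [isAcyclic_iff_forall_isBridge]
  constructor
  · intro h u hu v hv huv
    have hb := h (e := s(⟨u, hu⟩, ⟨v, hv⟩)) (by simpa using huv)
    rw [isBridge_iff] at hb
    refine ⟨{x | ∃ hx : x ∈ X,
      ((H.induce X).deleteEdges {s(⟨u, hu⟩, ⟨v, hv⟩)}).Reachable ⟨u, hu⟩ ⟨x, hx⟩}, ?_, ?_, ?_⟩
    · exact ⟨hu, Reachable.refl _⟩
    · rintro ⟨_, h'⟩
      exact hb h'
    · rintro x hx y hy hxy ⟨_, hrx⟩ hny
      by_contra hne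
      have hadj : ¬ ((H.induce X).deleteEdges {s(⟨u, hu⟩, ⟨v, hv⟩)}).Adj ⟨x, hx⟩ ⟨y, hy⟩ :=
        fun h' => hny ⟨hy, hrx.trans h'.reachable⟩
      simp only [deleteEdges_adj, Set.mem_singleton_iff, Sym2.eq_iff, Subtype.mk.injEq,
        comap_adj, Function.Embedding.subtype_apply] at hadj
      have h2 : x = v ∧ y = u := by tauto
      obtain ⟨rfl, rfl⟩ := h2
      exact hny ⟨hy, Reachable.refl _⟩
  · intro h e
    induction e using Sym2.ind with
    | _ u v =>
      obtain ⟨u, hu⟩ := u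
      obtain ⟨v, hv⟩ := v
      intro he
      obtain ⟨A, huA, hvA, hA⟩ := h u hu v hv (by simpa using he)
      rw [isBridge_iff]
      intro hr
      rw [reachable_iff_reflTransGen] at hr
      have key : ∀ w : X, Relation.ReflTransGen
          ((H.induce X).deleteEdges {s(⟨u, hu⟩, ⟨v, hv⟩)}).Adj ⟨u, hu⟩ w → (w : V) ∈ A := by
        intro w hw
        induction hw with
        | refl => exact huA
        | tail _ hbc ih =>
          rename_i b c _
          by_contra hc
          simp only [deleteEdges_adj, Set.mem_singleton_iff] at hbc
          obtain ⟨h1, h2⟩ := hA b b.2 c c.2 (by simpa using hbc.1) ih hc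
          exact hbc.2 (by rw [Sym2.eq_iff]; exact Or.inl ⟨Subtype.ext h1, Subtype.ext h2⟩)
      exact hvA (key _ hr)

theorem colorable_two_iff {V : Type} (H : SimpleGraph V) (X : Set V) :
    (H.induce X).Colorable 2 ↔ ∃ A : Set V, ∀ x ∈ X, ∀ y ∈ X, H.Adj x y → ¬ (x ∈ A ↔ y ∈ A) := by
  classical
  constructor
  · rintro ⟨C⟩
    refine ⟨{x | ∃ hx : x ∈ X, C ⟨x, hx⟩ = 0}, fun x hx y hy hxy => ?_⟩
    have := C.valid (v := ⟨x, hx⟩) (w := ⟨y, hy⟩) (by simpa using hxy)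
    simp only [Set.mem_ofPred_eq, hx, hy, exists_true_left]
    generalize C ⟨x, hx⟩ = p at *
    generalize C ⟨y, hy⟩ = q at *
    omega
  · rintro ⟨A, hA⟩
    refine ⟨Coloring.mk (fun x => if (x : V) ∈ A then 0 else 1) ?_⟩
    intro x y hxy
    have := hA x x.2 y y.2 (by simpa using hxy)
    by_cases h1 : (x : V) ∈ A <;> by_cases h2 : (y : V) ∈ A <;> simp_all

/-- Two forests glued along the pair `a, b` give a forest, provided the first one stays a
forest (inside `H`) when the edge `ab` is present. -/
theorem acyclic_glue {V : Type} {G H : SimpleGraph V} (hGH : G ≤ H) {M N : Set V} {a b : V}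
    (hab : H.Adj a b) (hMN : M ∩ N = {a, b})
    (hcross : ∀ x ∈ M, ∀ y ∈ N, G.Adj x y → x ∈ N ∨ y ∈ M)
    (hM : (H.induce M).IsAcyclic) (hN : (G.induce N).IsAcyclic) :
    (G.induce (M ∪ N)).IsAcyclic := by
  rw [acyclic_iff_cuts] at hM hN ⊢
  have hmem : ∀ x, x ∈ M → x ∈ N → x = a ∨ x = b := fun x h1 h2 => by
    have : x ∈ M ∩ N := ⟨h1, h2⟩
    simpa [hMN] using this
  have haM : a ∈ M ∩ N := by rw [hMN]; simp
  have hbM : b ∈ M ∩ N := by rw [hMN]; simp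
  -- If two cuts have the same trace on `{a, b}`, they combine to a cut of the union.
  have glue : ∀ A B : Set V, (a ∈ A ↔ a ∈ B) → (b ∈ A ↔ b ∈ B) → ∃ C : Set V,
      (∀ x ∈ M, x ∈ C ↔ x ∈ A) ∧ (∀ x ∈ N, x ∈ C ↔ x ∈ B) := by
    intro A B h1 h2
    refine ⟨{x | (x ∈ M ∧ x ∈ A) ∨ (x ∈ N ∧ x ∈ B)}, ?_, ?_⟩
    · intro x hx
      have := hmem x hx
      simp only [Set.mem_ofPred_eq]
      grind
    · intro x hx
      have := fun h => hmem x h hx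
      simp only [Set.mem_ofPred_eq]
      grind
  -- Cuts separating `a` from `b` in the first part, crossed only by the edge `ab`.
  obtain ⟨B, haB, hbB, hB⟩ := hM a haM.1 b hbM.1 hab
  obtain ⟨B', hbB', haB', hB'⟩ := hM b hbM.1 a haM.1 hab.symm
  have hsplit : ∀ x ∈ M ∪ N, ∀ y ∈ M ∪ N, G.Adj x y → (x ∈ M ∧ y ∈ M) ∨ (x ∈ N ∧ y ∈ N) := by
    intro x hx y hy hxy
    have h1 := hcross x
    have h2 := hcross y
    have := hxy.symm
    grind
  have edgeN : ∀ u ∈ N, ∀ v ∈ N, G.Adj u v → ∃ A : Set V, u ∈ A ∧ v ∉ A ∧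
      ∀ x ∈ M ∪ N, ∀ y ∈ M ∪ N, G.Adj x y → x ∈ A → y ∉ A → x = u ∧ y = v := by
    intro u hu v hv huv
    obtain ⟨A, huA, hvA, hA⟩ := hN u hu v hv huv
    -- The trace on the first part: constant, or one of the two cuts crossed only by `ab`.
    have : ∃ A₁ : Set V, (a ∈ A₁ ↔ a ∈ A) ∧ (b ∈ A₁ ↔ b ∈ A) ∧
        ∀ x ∈ M, ∀ y ∈ M, H.Adj x y → x ∈ A₁ → y ∉ A₁ → (x = a ∧ y = b) ∨ (x = b ∧ y = a) := by
      by_cases h1 : a ∈ A <;> by_cases h2 : b ∈ A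
      · exact ⟨Set.univ, by simp [h1], by simp [h2], by simp⟩
      · exact ⟨B, by simp [h1, haB], by simp [h2, hbB], fun x hx y hy h h3 h4 =>
          Or.inl (hB x hx y hy h h3 h4)⟩
      · exact ⟨B', by simp [h1, haB'], by simp [h2, hbB'], fun x hx y hy h h3 h4 =>
          Or.inr (hB' x hx y hy h h3 h4)⟩
      · exact ⟨∅, by simp [h1], by simp [h2], by simp⟩
    obtain ⟨A₁, ha1, hb1, hA1⟩ := this
    obtain ⟨C, hC1, hC2⟩ := glue A₁ A ha1 hb1
    refine ⟨C, (hC2 u hu).2 huA, fun h => hvA ((hC2 v hv).1 h), ?_⟩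
    intro x hx y hy hxy hxC hyC
    have inN : x ∈ N → y ∈ N → x = u ∧ y = v := fun h1 h2 =>
      hA x h1 y h2 hxy ((hC2 x h1).1 hxC) (fun h => hyC ((hC2 y h2).2 h))
    rcases hsplit x hx y hy hxy with ⟨h1, h2⟩ | ⟨h1, h2⟩
    · rcases hA1 x h1 y h2 (hGH hxy) ((hC1 x h1).1 hxC) (fun h => hyC ((hC1 y h2).2 h)) with
        ⟨rfl, rfl⟩ | ⟨rfl, rfl⟩
      · exact inN haM.2 hbM.2
      · exact inN hbM.2 haM.2
    · exact inN h1 h2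
  intro u hu v hv huv
  rcases hsplit u hu v hv huv with ⟨h1, h2⟩ | ⟨h1, h2⟩
  · by_cases hN2 : u ∈ N ∧ v ∈ N
    · exact edgeN u hN2.1 v hN2.2 huv
    -- The edge `uv` differs from `ab`, so its cut does not separate `a` from `b`.
    obtain ⟨A, huA, hvA, hA⟩ := hM u h1 v h2 (hGH huv)
    have hiff : a ∈ A ↔ b ∈ A := by
      constructor
      · intro h
        by_contra h'
        obtain ⟨rfl, rfl⟩ := hA a haM.1 b hbM.1 hab h h'
        exact hN2 ⟨haM.2, hbM.2⟩
      · intro h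
        by_contra h'
        obtain ⟨rfl, rfl⟩ := hA b hbM.1 a haM.1 hab.symm h h'
        exact hN2 ⟨hbM.2, haM.2⟩
    obtain ⟨C, hC1, hC2⟩ := glue A {_x | a ∈ A} (by simp) (by simp [hiff])
    refine ⟨C, (hC1 u h1).2 huA, fun h => hvA ((hC1 v h2).1 h), ?_⟩
    intro x hx y hy hxy hxC hyC
    rcases hsplit x hx y hy hxy with ⟨h1, h2⟩ | ⟨h1, h2⟩
    · exact hA x h1 y h2 (hGH hxy) ((hC1 x h1).1 hxC) (fun h => hyC ((hC1 y h2).2 h))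
    · exact absurd ((hC2 y h2).2 ((hC2 x h1).1 hxC)) hyC
  · exact edgeN u h1 v h2 huv

/-- Two bipartite graphs glued along an edge give a bipartite graph. -/
theorem colorable_glue {V : Type} {G : SimpleGraph V} {M N : Set V} {a b : V}
    (hab : G.Adj a b) (hMN : M ∩ N = {a, b})
    (hcross : ∀ x ∈ M, ∀ y ∈ N, G.Adj x y → x ∈ N ∨ y ∈ M)
    (hM : (G.induce M).Colorable 2) (hN : (G.induce N).Colorable 2) :
    (G.induce (M ∪ N)).Colorable 2 := by
  rw [colorable_two_iff] at hM hN ⊢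
  have hmem : ∀ x, x ∈ M → x ∈ N → x = a ∨ x = b := fun x h1 h2 => by
    have : x ∈ M ∩ N := ⟨h1, h2⟩
    simpa [hMN] using this
  have haM : a ∈ M ∩ N := by rw [hMN]; simp
  have hbM : b ∈ M ∩ N := by rw [hMN]; simp
  obtain ⟨A, hA⟩ := hM
  obtain ⟨B, hB⟩ := hN
  have h1 := hA a haM.1 b hbM.1 hab
  have h2 := hB a haM.2 b hbM.2 hab
  have hsplit : ∀ x ∈ M ∪ N, ∀ y ∈ M ∪ N, G.Adj x y → (x ∈ M ∧ y ∈ M) ∨ (x ∈ N ∧ y ∈ N) := by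
    intro x hx y hy hxy
    have h1 := hcross x
    have h2 := hcross y
    have := hxy.symm
    grind
  -- Swap the two colours of the second part, if necessary, to agree at `a` (hence at `b`).
  obtain ⟨B, haB, hbB, hB⟩ : ∃ B : Set V, (a ∈ B ↔ a ∈ A) ∧ (b ∈ B ↔ b ∈ A) ∧
      ∀ x ∈ N, ∀ y ∈ N, G.Adj x y → ¬ (x ∈ B ↔ y ∈ B) := by
    by_cases h : a ∈ A ↔ a ∈ B
    · exact ⟨B, by tauto, by tauto, hB⟩
    · refine ⟨Bᶜ, by simp only [Set.mem_compl_iff]; tauto,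
        by simp only [Set.mem_compl_iff]; tauto, fun x hx y hy hxy => ?_⟩
      have := hB x hx y hy hxy
      simp only [Set.mem_compl_iff]
      tauto
  refine ⟨{x | (x ∈ M ∧ x ∈ A) ∨ (x ∈ N ∧ x ∈ B)}, fun x hx y hy hxy => ?_⟩
  have hx2 := hmem x
  have hy2 := hmem y
  have hAx := hA x
  have hBx := hB x
  simp only [Set.mem_ofPred_eq]
  rcases hsplit x hx y hy hxy with ⟨h1, h2⟩ | ⟨h1, h2⟩
  · have := hA x h1 y h2 hxy
    grind
  · have := hB x h1 y h2 hxy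
    grind

/-! ### Separations and cuts of the two parts -/

/-- `X` is partitioned into `M`, `P`, `Q` with no edge of `H` between `P` and `Q`; the sides
`P` and `Q` may be empty. -/
structure PartSep {V : Type} (H : SimpleGraph V) (X M P Q : Set V) : Prop where
  cover : ∀ v, v ∈ X ↔ v ∈ M ∨ v ∈ P ∨ v ∈ Q
  disjMP : ∀ v ∈ M, v ∉ P
  disjMQ : ∀ v ∈ M, v ∉ Q
  disjPQ : ∀ v ∈ P, v ∉ Q
  nadj : ∀ x ∈ P, ∀ y ∈ Q, ¬ H.Adj x y

theorem PartSep.symm {V : Type} {H : SimpleGraph V} {X M P Q : Set V}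
    (h : PartSep H X M P Q) : PartSep H X M Q P where
  cover v := by rw [h.cover]; tauto
  disjMP := h.disjMQ
  disjMQ := h.disjMP
  disjPQ v h1 h2 := h.disjPQ v h2 h1
  nadj x hx y hy hxy := h.nadj y hy x hx hxy.symm

theorem PartSep.isVertexCut {V : Type} {G : SimpleGraph V} {M P Q : Set V}
    (h : PartSep G Set.univ M P Q) (hP : P.Nonempty) (hQ : Q.Nonempty) : IsVertexCut G M := by
  refine ⟨P, Q, hP, hQ, Set.disjoint_left.2 h.disjPQ, ?_, h.nadj⟩
  ext v
  have h1 := h.cover v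
  have h2 := h.disjMP v
  have h3 := h.disjMQ v
  simp only [Set.mem_univ, true_iff] at h1
  simp only [Set.mem_union, Set.mem_compl_iff]
  tauto

/-- The edges of `H` with both ends in `X`. -/
def edgesIn {V : Type} (H : SimpleGraph V) (X : Set V) : Set (Sym2 V) :=
  {e | e ∈ H.edgeSet ∧ ∀ v ∈ e, v ∈ X}

theorem card_edgeSet_induce {V : Type} (H : SimpleGraph V) (X : Set V) :
    Nat.card (H.induce X).edgeSet = (edgesIn H X).ncard := by
  rw [Nat.card_coe_set_eq, ← Set.ncard_image_of_injective _
    (Sym2.map.injective (Subtype.val_injective (p := fun x => x ∈ X)))]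
  congr 1
  ext e
  induction e using Sym2.ind with
  | _ u v =>
    simp only [Set.mem_image, edgesIn, Set.mem_ofPred_eq, mem_edgeSet, Sym2.mem_iff,
      forall_eq_or_imp, forall_eq]
    constructor
    · rintro ⟨e, he, heq⟩
      induction e using Sym2.ind with
      | _ x y =>
        simp only [Sym2.map_mk, Sym2.eq_iff] at heq
        have hxy : H.Adj x y := by simpa using he
        rcases heq with ⟨rfl, rfl⟩ | ⟨rfl, rfl⟩
        · exact ⟨hxy, x.2, y.2⟩
        · exact ⟨hxy.symm, y.2, x.2⟩
    · rintro ⟨h, hu, hv⟩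
      exact ⟨s(⟨u, hu⟩, ⟨v, hv⟩), by simpa using h, by simp⟩

/-- Numerical form of `quality > 0` for the subgraph of `H` induced on `X`,
with `β` eliminated through `4α − β = 6`. -/
def Sparse {V : Type} (α : ℝ) (H : SimpleGraph V) (X : Set V) : Prop :=
  ((edgesIn H X).ncard : ℝ) < α * ((X.ncard : ℝ) - 4) + 6

/-- By minimality, a sparse induced subgraph on fewer vertices (possibly with additional
edges) has a `Ψ`-cut. -/
theorem exists_cut_of_sparse {Ψ : ∀ (W : Type), SimpleGraph W → Prop}
    (hΨ : Ψ = ForestClass ∨ Ψ = BipartiteClass)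
    {α β : ℝ} (hβ : 4 * α - β = 6) {V : Type} [Finite V] {G : SimpleGraph V}
    (hG : MinCounterexample Ψ α β G) (H : SimpleGraph V) {X : Set V}
    (hX4 : 4 ≤ X.ncard) (hXn : X.ncard < Nat.card V) (hsp : Sparse α H X) :
    ∃ M P Q : Set V, PartSep H X M P Q ∧ P.Nonempty ∧ Q.Nonempty ∧ Ψ M (H.induce M) := by
  obtain ⟨M, ⟨P, Q, ⟨p, hp⟩, ⟨q, hq⟩, hd, hu, hn⟩, hψ⟩ := hG.2.2.2 X (H.induce X)
    (by rwa [Nat.card_coe_set_eq]) (by rwa [Nat.card_coe_set_eq])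
    (by
      unfold Sparse at hsp
      rw [quality, card_edgeSet_induce, Nat.card_coe_set_eq]
      linarith)
  have hmem : ∀ v : X, v ∈ P ∨ v ∈ Q ↔ v ∉ M := fun v => by
    rw [← Set.mem_union, hu, Set.mem_compl_iff]
  rw [Set.disjoint_left] at hd
  refine ⟨Subtype.val '' M, Subtype.val '' P, Subtype.val '' Q, ⟨?_, ?_, ?_, ?_, ?_⟩,
    ⟨p, p, hp, rfl⟩, ⟨q, q, hq, rfl⟩, ?_⟩
  · intro v
    constructor
    · intro hv
      have := hmem ⟨v, hv⟩
      by_cases h1 : (⟨v, hv⟩ : X) ∈ M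
      · exact Or.inl ⟨_, h1, rfl⟩
      · rcases this.2 h1 with h2 | h2
        · exact Or.inr (Or.inl ⟨_, h2, rfl⟩)
        · exact Or.inr (Or.inr ⟨_, h2, rfl⟩)
    · rintro (⟨x, _, rfl⟩ | ⟨x, _, rfl⟩ | ⟨x, _, rfl⟩) <;> exact x.2
  · rintro _ ⟨x, hx, rfl⟩ ⟨y, hy, hxy⟩
    obtain rfl := Subtype.ext hxy
    exact (hmem y).1 (Or.inl hy) hx
  · rintro _ ⟨x, hx, rfl⟩ ⟨y, hy, hxy⟩
    obtain rfl := Subtype.ext hxy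
    exact (hmem y).1 (Or.inr hy) hx
  · rintro _ ⟨x, hx, rfl⟩ ⟨y, hy, hxy⟩
    obtain rfl := Subtype.ext hxy
    exact hd hx hy
  · rintro _ ⟨x, hx, rfl⟩ _ ⟨y, hy, rfl⟩ hxy
    exact hn x hx y hy (by simpa using hxy)
  · have hM : ∀ v : (Subtype.val '' M : Set V), ∃ hv : (v : V) ∈ X, (⟨v, hv⟩ : X) ∈ M := by
      rintro ⟨_, x, hx, rfl⟩
      exact ⟨x.2, hx⟩
    refine psi_hom hΨ (H := (H.induce X).induce M)
      ⟨fun v => ⟨⟨v, (hM v).1⟩, (hM v).2⟩, fun {u v} h => by simpa using h⟩ ?_ hψ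
    intro u v huv
    exact Subtype.ext (congrArg (fun z => (z.1.1 : V)) huv)

/-- A `Ψ`-cut of the part on `S ∪ L` must separate two vertices of `S`: otherwise it is a
`Ψ`-cut of the whole minimal counterexample. -/
theorem exists_separating {Ψ : ∀ (W : Type), SimpleGraph W → Prop}
    (hΨ : Ψ = ForestClass ∨ Ψ = BipartiteClass)
    {α β : ℝ} (hβ : 4 * α - β = 6) {V : Type} [Finite V] {G : SimpleGraph V}
    (hG : MinCounterexample Ψ α β G) {H : SimpleGraph V} (hGH : G ≤ H) {S L R : Set V}
    (hsep : PartSep G Set.univ S L R) (hL : L.Nonempty) (hR : R.Nonempty) (hS : 3 ≤ S.ncard)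
    (hsp : Sparse α H (S ∪ L)) :
    ∃ M P Q : Set V, PartSep H (S ∪ L) M P Q ∧ Ψ M (H.induce M) ∧
      (∃ x ∈ S, x ∈ P) ∧ (∃ y ∈ S, y ∈ Q) := by
  have hX4 : 4 ≤ (S ∪ L).ncard := by
    rw [Set.ncard_union_eq (Set.disjoint_left.2 hsep.disjMP)]
    have := hL.ncard_pos
    omega
  have hXn : (S ∪ L).ncard < Nat.card V := by
    obtain ⟨r, hr⟩ := hR
    refine Set.ncard_lt_card fun h => ?_
    have : r ∈ S ∪ L := by rw [h]; trivial
    rcases this with h | h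
    · exact hsep.disjMQ r h hr
    · exact hsep.disjPQ r h hr
  obtain ⟨M, P, Q, hpart, hP, hQ, hψ⟩ := exists_cut_of_sparse hΨ hβ hG H hX4 hXn hsp
  have hψG : Ψ M (G.induce M) :=
    psi_hom hΨ ⟨id, fun {u v} h => hGH h⟩ Function.injective_id hψ
  -- A side `P` that avoids `S` lies in `L`, so `R` can be added to the other side.
  have main : ∀ P Q : Set V, PartSep H (S ∪ L) M P Q → P.Nonempty → Q.Nonempty →
      ∃ x ∈ S, x ∈ P := by
    intro P Q hpart hP hQ
    by_contra hno
    push Not at hno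
    have hPL : ∀ v ∈ P, v ∈ L := fun v hv => by
      rcases (hpart.cover v).2 (Or.inr (Or.inl hv)) with h | h
      · exact absurd hv (hno v h)
      · exact h
    have hRX : ∀ v ∈ R, v ∉ S ∪ L := fun v hv h => by
      rcases h with h | h
      · exact hsep.disjMQ v h hv
      · exact hsep.disjPQ v h hv
    have hnew : PartSep G Set.univ M P (Q ∪ R) := by
      refine ⟨fun v => ?_, hpart.disjMP, ?_, ?_, ?_⟩
      · have h1 := hsep.cover v
        have h2 := hpart.cover v
        simp only [Set.mem_union, Set.mem_univ, true_iff] at *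
        tauto
      · rintro v hv (h | h)
        · exact hpart.disjMQ v hv h
        · exact hRX v h ((hpart.cover v).2 (Or.inl hv))
      · rintro v hv (h | h)
        · exact hpart.disjPQ v hv h
        · exact hRX v h ((hpart.cover v).2 (Or.inr (Or.inl hv)))
      · rintro x hx y (hy | hy) hxy
        · exact hpart.nadj x hx y hy (hGH hxy)
        · exact hsep.nadj x (hPL x hx) y hy hxy
    exact hG.2.2.1 ⟨M, hnew.isVertexCut hP (hQ.mono Set.subset_union_left), hψG⟩
  exact ⟨M, P, Q, hpart, hψ, main P Q hpart hP hQ, main Q P hpart.symm hQ hP⟩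

/-- Edges and vertices of the two parts `S ∪ L` and `S ∪ R` of a separation, counted
together. -/
theorem sep_counts {V : Type} [Finite V] {G : SimpleGraph V} {S L R : Set V}
    (hsep : PartSep G Set.univ S L R) :
    (S ∪ L).ncard + (S ∪ R).ncard = Nat.card V + S.ncard ∧
    (edgesIn G (S ∪ L)).ncard + (edgesIn G (S ∪ R)).ncard
      = Nat.card G.edgeSet + (edgesIn G S).ncard := by
  have hcov : ∀ v, v ∈ S ∨ v ∈ L ∨ v ∈ R := fun v => (hsep.cover v).1 trivial
  constructor
  · rw [← Set.ncard_union_add_ncard_inter, ← Set.ncard_univ]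
    congr 2
    · ext v
      have := hcov v
      simp only [Set.mem_union, Set.mem_univ, iff_true]
      tauto
    · ext v
      have := hsep.disjPQ v
      simp only [Set.mem_union, Set.mem_inter_iff]
      tauto
  · rw [← Set.ncard_union_add_ncard_inter, Nat.card_coe_set_eq]
    congr 2
    · ext e
      induction e using Sym2.ind with
      | _ u v =>
        have h1 := hcov u
        have h2 := hcov v
        have h3 := hsep.nadj u
        have h4 := hsep.nadj v
        have h5 := G.adj_comm u v
        simp only [edgesIn, Set.mem_union, Set.mem_ofPred_eq, mem_edgeSet, Sym2.mem_iff,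
          forall_eq_or_imp, forall_eq]
        grind
    · ext e
      induction e using Sym2.ind with
      | _ u v =>
        have h3 := hsep.disjPQ u
        have h4 := hsep.disjPQ v
        simp only [edgesIn, Set.mem_union, Set.mem_ofPred_eq, mem_edgeSet, Sym2.mem_iff,
          forall_eq_or_imp, forall_eq, Set.mem_inter_iff]
        tauto

theorem edgesIn_sup_edge_le {V : Type} [Finite V] (H : SimpleGraph V) (a b : V) (X : Set V) :
    (edgesIn (H ⊔ edge a b) X).ncard ≤ (edgesIn H X).ncard + 1 := by
  refine le_trans (Set.ncard_le_ncard (t := insert s(a, b) (edgesIn H X)) ?_)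
    (Set.ncard_insert_le _ _)
  intro e
  induction e using Sym2.ind with
  | _ u v =>
    simp only [edgesIn, Set.mem_ofPred_eq, mem_edgeSet, sup_adj, adj_edge, Set.mem_insert_iff]
    rintro ⟨h | h, h2⟩
    · exact Or.inr ⟨h, h2⟩
    · exact Or.inl h.1.symm

/-! ### Edge counts and clique cuts -/

/-- If `S` is a clique of `H ⊇ G`, the part on `S ∪ L` is not sparse in `H`. -/
theorem not_sparse_of_clique {Ψ : ∀ (W : Type), SimpleGraph W → Prop}
    (hΨ : Ψ = ForestClass ∨ Ψ = BipartiteClass)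
    {α β : ℝ} (hβ : 4 * α - β = 6) {V : Type} [Finite V] {G : SimpleGraph V}
    (hG : MinCounterexample Ψ α β G) {H : SimpleGraph V} (hGH : G ≤ H) {S L R : Set V}
    (hsep : PartSep G Set.univ S L R) (hL : L.Nonempty) (hR : R.Nonempty) (hS : 3 ≤ S.ncard)
    (hclique : ∀ x ∈ S, ∀ y ∈ S, x ≠ y → H.Adj x y) : ¬ Sparse α H (S ∪ L) := by
  intro hsp
  obtain ⟨M, P, Q, hpart, -, ⟨x, hxS, hxP⟩, ⟨y, hyS, hyQ⟩⟩ :=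
    exists_separating hΨ hβ hG hGH hsep hL hR hS hsp
  have hne : x ≠ y := by
    rintro rfl
    exact hpart.disjPQ x hxP hyQ
  exact hpart.nadj x hxP y hyQ (hclique x hxS y hyS hne)

/-- Edge count of the two parts in a minimal counterexample: the excess over the sparsity
threshold is limited by the number of edges inside `S`. -/
theorem sum_lt {Ψ : ∀ (W : Type), SimpleGraph W → Prop}
    {α β : ℝ} (hβ : 4 * α - β = 6) {V : Type} [Finite V] {G : SimpleGraph V}
    (hG : MinCounterexample Ψ α β G) {S L R : Set V} (hsep : PartSep G Set.univ S L R) :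
    ((edgesIn G (S ∪ L)).ncard : ℝ) + (edgesIn G (S ∪ R)).ncard <
      (α * (((S ∪ L).ncard : ℝ) - 4) + 6) + (α * (((S ∪ R).ncard : ℝ) - 4) + 6)
      + ((edgesIn G S).ncard - 6 - α * ((S.ncard : ℝ) - 4)) := by
  obtain ⟨h1, h2⟩ := sep_counts hsep
  have h1' : ((S ∪ L).ncard : ℝ) + (S ∪ R).ncard = Nat.card V + S.ncard := by exact_mod_cast h1
  have h2' : ((edgesIn G (S ∪ L)).ncard : ℝ) + (edgesIn G (S ∪ R)).ncard
      = Nat.card G.edgeSet + (edgesIn G S).ncard := by exact_mod_cast h2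
  have hq := hG.2.1
  unfold quality at hq
  have h3 : α * ((S ∪ L).ncard : ℝ) + α * ((S ∪ R).ncard : ℝ)
      = α * Nat.card V + α * S.ncard := by rw [← mul_add, h1', mul_add]
  linarith

/-- `S` is not a clique on three or four vertices. -/
theorem not_clique {Ψ : ∀ (W : Type), SimpleGraph W → Prop}
    (hΨ : Ψ = ForestClass ∨ Ψ = BipartiteClass)
    {α β : ℝ} (hα2 : α ≤ 3) (hβ : 4 * α - β = 6) {V : Type} [Finite V] {G : SimpleGraph V}
    (hG : MinCounterexample Ψ α β G) {S L R : Set V}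
    (hsep : PartSep G Set.univ S L R) (hL : L.Nonempty) (hR : R.Nonempty)
    (hcount : (S.ncard = 3 ∧ (edgesIn G S).ncard ≤ 3) ∨ (S.ncard = 4 ∧ (edgesIn G S).ncard ≤ 6))
    (hclique : ∀ x ∈ S, ∀ y ∈ S, x ≠ y → G.Adj x y) : False := by
  have hS : 3 ≤ S.ncard := by omega
  have h1 := not_sparse_of_clique hΨ hβ hG le_rfl hsep hL hR hS hclique
  have h2 := not_sparse_of_clique hΨ hβ hG le_rfl hsep.symm hR hL hS hclique
  have h3 := sum_lt hβ hG hsep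
  unfold Sparse at h1 h2
  rcases hcount with ⟨hs, he⟩ | ⟨hs, he⟩
  · have he' : ((edgesIn G S).ncard : ℝ) ≤ 3 := by exact_mod_cast he
    rw [hs] at h3
    push_cast at h3
    linarith
  · have he' : ((edgesIn G S).ncard : ℝ) ≤ 6 := by exact_mod_cast he
    rw [hs] at h3
    push_cast at h3
    linarith

/-! ### Diamonds and 4-cycles -/

/-- Cuts of the two parts that both contain `a, b` and separate `c` from `d` unite to a cut of
`G`. The two cuts meet exactly in `{a, b}` and no edge joins `M₁ ∖ M₂` to `M₂ ∖ M₁`, so that the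
gluing lemmas apply to the union. -/
theorem union_cut {V : Type} {G : SimpleGraph V} {a b c d : V} {S L R : Set V}
    (hSeq : S = {a, b, c, d}) (hsep : PartSep G Set.univ S L R)
    {M₁ P₁ Q₁ M₂ P₂ Q₂ : Set V} (h₁ : PartSep G (S ∪ L) M₁ P₁ Q₁)
    (h₂ : PartSep G (S ∪ R) M₂ P₂ Q₂) (ha₁ : a ∈ M₁) (hb₁ : b ∈ M₁) (ha₂ : a ∈ M₂)
    (hb₂ : b ∈ M₂) (hc₁ : c ∈ P₁) (hc₂ : c ∈ P₂) (hd₁ : d ∈ Q₁) (hd₂ : d ∈ Q₂) :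
    IsVertexCut G (M₁ ∪ M₂) ∧ M₁ ∩ M₂ = {a, b} ∧
      ∀ x ∈ M₁, ∀ y ∈ M₂, G.Adj x y → x ∈ M₂ ∨ y ∈ M₁ := by
  have hSm : ∀ v, v ∈ S ↔ v = a ∨ v = b ∨ v = c ∨ v = d := fun v => by simp [hSeq]
  have c1 : ∀ v, (v ∈ S ∨ v ∈ L) ↔ v ∈ M₁ ∨ v ∈ P₁ ∨ v ∈ Q₁ := h₁.cover
  have c2 : ∀ v, (v ∈ S ∨ v ∈ R) ↔ v ∈ M₂ ∨ v ∈ P₂ ∨ v ∈ Q₂ := h₂.cover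
  have c0 : ∀ v, v ∈ S ∨ v ∈ L ∨ v ∈ R := fun v => (hsep.cover v).1 trivial
  obtain ⟨-, s1, s2, s3, s4⟩ := hsep
  obtain ⟨-, p1, p2, p3, p4⟩ := h₁
  obtain ⟨-, q1, q2, q3, q4⟩ := h₂
  have s5 : ∀ x ∈ L, ∀ y ∈ R, ¬ G.Adj y x := fun x hx y hy h => s4 x hx y hy h.symm
  refine ⟨PartSep.isVertexCut (P := P₁ ∪ P₂) (Q := Q₁ ∪ Q₂) ⟨?_, ?_, ?_, ?_, ?_⟩
    ⟨c, Or.inl hc₁⟩ ⟨d, Or.inl hd₁⟩, ?_, ?_⟩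
  · intro v
    simp only [Set.mem_union, Set.mem_univ, true_iff]
    grind
  · intro v
    simp only [Set.mem_union]
    grind
  · intro v
    simp only [Set.mem_union]
    grind
  · intro v
    simp only [Set.mem_union]
    grind
  · intro x hx y hy
    simp only [Set.mem_union] at hx hy
    grind
  · ext v
    simp only [Set.mem_inter_iff, Set.mem_insert_iff, Set.mem_singleton_iff]
    grind
  · grind

/-- When `S` carries the 4-cycle `a c b d`, a separation of the two vertices of `S` must be one
of the two diagonals, with the other diagonal inside the cut. -/
theorem diagonal_of_sep {V : Type} {H : SimpleGraph V} {a b c d : V} {S L M P Q : Set V}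
    (hSeq : S = {a, b, c, d}) (hac : H.Adj a c) (had : H.Adj a d) (hbc : H.Adj b c)
    (hbd : H.Adj b d) (hpart : PartSep H (S ∪ L) M P Q)
    (hx : ∃ x ∈ S, x ∈ P) (hy : ∃ y ∈ S, y ∈ Q) :
    (∃ P' Q', PartSep H (S ∪ L) M P' Q' ∧ a ∈ M ∧ b ∈ M ∧ c ∈ P' ∧ d ∈ Q') ∨
    (∃ P' Q', PartSep H (S ∪ L) M P' Q' ∧ c ∈ M ∧ d ∈ M ∧ a ∈ P' ∧ b ∈ Q') := by
  have hSm : ∀ v, v ∈ S ↔ v = a ∨ v = b ∨ v = c ∨ v = d := fun v => by simp [hSeq]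
  have c1 : ∀ v, v ∈ S → v ∈ M ∨ v ∈ P ∨ v ∈ Q := fun v hv => (hpart.cover v).1 (Or.inl hv)
  have p1 := hpart.disjMP
  have p2 := hpart.disjMQ
  have p3 := hpart.disjPQ
  have p4 := hpart.nadj
  have p5 : ∀ x ∈ P, ∀ y ∈ Q, ¬ H.Adj y x := fun x hx y hy h => p4 x hx y hy h.symm
  have ca := c1 a ((hSm a).2 (by simp))
  have cb := c1 b ((hSm b).2 (by simp))
  have cc := c1 c ((hSm c).2 (by simp))
  have cd := c1 d ((hSm d).2 (by simp))
  have : (a ∈ M ∧ b ∈ M ∧ c ∈ P ∧ d ∈ Q) ∨ (a ∈ M ∧ b ∈ M ∧ c ∈ Q ∧ d ∈ P) ∨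
      (c ∈ M ∧ d ∈ M ∧ a ∈ P ∧ b ∈ Q) ∨ (c ∈ M ∧ d ∈ M ∧ a ∈ Q ∧ b ∈ P) := by
    obtain ⟨x, hxS, hxP⟩ := hx
    obtain ⟨y, hyS, hyQ⟩ := hy
    rw [hSm] at hxS hyS
    clear hSm c1 hSeq hpart
    rcases hxS with rfl | rfl | rfl | rfl <;> rcases hyS with rfl | rfl | rfl | rfl <;> grind
  rcases this with h | h | h | h
  · exact Or.inl ⟨P, Q, hpart, h⟩
  · exact Or.inl ⟨Q, P, hpart.symm, h⟩
  · exact Or.inr ⟨P, Q, hpart, h⟩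
  · exact Or.inr ⟨Q, P, hpart.symm, h⟩

/-- If the diagonal `ab` is an edge, the other diagonal is the one that is separated. -/
theorem separates_of_adj {V : Type} {H : SimpleGraph V} {a b c d : V} {S L M P Q : Set V}
    (hSeq : S = {a, b, c, d}) (hab : H.Adj a b) (hac : H.Adj a c) (had : H.Adj a d)
    (hbc : H.Adj b c) (hbd : H.Adj b d) (hpart : PartSep H (S ∪ L) M P Q)
    (hx : ∃ x ∈ S, x ∈ P) (hy : ∃ y ∈ S, y ∈ Q) :
    ∃ P' Q', PartSep H (S ∪ L) M P' Q' ∧ a ∈ M ∧ b ∈ M ∧ c ∈ P' ∧ d ∈ Q' := by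
  rcases diagonal_of_sep hSeq hac had hbc hbd hpart hx hy with h | ⟨P', Q', h, -, -, h1, h2⟩
  · exact h
  · exact absurd hab (h.nadj a h1 b h2)

theorem PartSep.anti {V : Type} {G H : SimpleGraph V} (hGH : G ≤ H) {X M P Q : Set V}
    (h : PartSep H X M P Q) : PartSep G X M P Q :=
  ⟨h.cover, h.disjMP, h.disjMQ, h.disjPQ, fun x hx y hy hxy => h.nadj x hx y hy (hGH hxy)⟩

/-- `S` does not induce a diamond. The non-adjacent pair is `c, d`. -/
theorem not_diamond {Ψ : ∀ (W : Type), SimpleGraph W → Prop}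
    (hΨ : Ψ = ForestClass ∨ Ψ = BipartiteClass)
    {α β : ℝ} (hβ : 4 * α - β = 6) {V : Type} [Finite V] {G : SimpleGraph V}
    (hG : MinCounterexample Ψ α β G) {a b c d : V} {S L R : Set V}
    (hsep : PartSep G Set.univ S L R) (hL : L.Nonempty) (hR : R.Nonempty)
    (hSeq : S = {a, b, c, d}) (hcard : S.ncard = 4) (hcd : c ≠ d)
    (hab : G.Adj a b) (hac : G.Adj a c) (had : G.Adj a d)
    (hbc : G.Adj b c) (hbd : G.Adj b d) (he : (edgesIn G S).ncard ≤ 5) : False := by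
  have hS : 3 ≤ S.ncard := by omega
  have hclique : ∀ x ∈ S, ∀ y ∈ S, x ≠ y → (G ⊔ edge c d).Adj x y := by
    have hSm : ∀ v, v ∈ S ↔ v = a ∨ v = b ∨ v = c ∨ v = d := fun v => by simp [hSeq]
    intro x hx y hy hxy
    rw [hSm] at hx hy
    rw [sup_adj, edge_adj]
    rcases hx with rfl | rfl | rfl | rfl <;> rcases hy with rfl | rfl | rfl | rfl <;>
      simp_all [G.adj_comm]
  -- If one part is not sparse, adding `cd` to the other part makes too many edges in total.
  have main : ∀ L R : Set V, PartSep G Set.univ S L R → L.Nonempty → R.Nonempty →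
      Sparse α G (S ∪ L) := by
    intro L R hsep hL hR
    by_contra h1
    have h2 := not_sparse_of_clique hΨ hβ hG le_sup_left hsep.symm hR hL hS hclique
    have h3 := sum_lt hβ hG hsep
    unfold Sparse at h1 h2
    have h4 : ((edgesIn (G ⊔ edge c d) (S ∪ R)).ncard : ℝ) ≤ (edgesIn G (S ∪ R)).ncard + 1 := by
      exact_mod_cast edgesIn_sup_edge_le G c d (S ∪ R)
    have he' : ((edgesIn G S).ncard : ℝ) ≤ 5 := by exact_mod_cast he
    rw [hcard] at h3
    push_cast at h3
    linarith
  obtain ⟨M₁, P₁, Q₁, hp₁, hψ₁, hx₁, hy₁⟩ :=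
    exists_separating hΨ hβ hG le_rfl hsep hL hR hS (main L R hsep hL hR)
  obtain ⟨M₂, P₂, Q₂, hp₂, hψ₂, hx₂, hy₂⟩ :=
    exists_separating hΨ hβ hG le_rfl hsep.symm hR hL hS (main R L hsep.symm hR hL)
  obtain ⟨P₁, Q₁, hp₁, ha₁, hb₁, hc₁, hd₁⟩ :=
    separates_of_adj hSeq hab hac had hbc hbd hp₁ hx₁ hy₁
  obtain ⟨P₂, Q₂, hp₂, ha₂, hb₂, hc₂, hd₂⟩ :=
    separates_of_adj hSeq hab hac had hbc hbd hp₂ hx₂ hy₂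
  obtain ⟨hcut, hint, hcross⟩ :=
    union_cut hSeq hsep hp₁ hp₂ ha₁ hb₁ ha₂ hb₂ hc₁ hc₂ hd₁ hd₂
  refine hG.2.2.1 ⟨_, hcut, ?_⟩
  rcases hΨ with rfl | rfl
  · exact acyclic_glue le_rfl hab hint hcross hψ₁ hψ₂
  · exact colorable_glue hab hint hcross hψ₁ hψ₂

/-- For the class of forests, `S` does not induce a 4-cycle `a c b d`. -/
theorem not_cycle {α β : ℝ} (hβ : 4 * α - β = 6) {V : Type} [Finite V] {G : SimpleGraph V}
    (hG : MinCounterexample ForestClass α β G) {a b c d : V} {S L R : Set V}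
    (hsep : PartSep G Set.univ S L R) (hL : L.Nonempty) (hR : R.Nonempty)
    (hSeq : S = {a, b, c, d}) (hcard : S.ncard = 4) (hab : a ≠ b) (hcd : c ≠ d)
    (hac : G.Adj a c) (had : G.Adj a d)
    (hbc : G.Adj b c) (hbd : G.Adj b d) (he : (edgesIn G S).ncard ≤ 4) : False := by
  have hS : 3 ≤ S.ncard := by omega
  have hF := Or.inl (b := ForestClass = BipartiteClass) (rfl : ForestClass = ForestClass)
  have hSm : ∀ v, v ∈ S ↔ v = a ∨ v = b ∨ v = c ∨ v = d := fun v => by simp [hSeq]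
  have hclique : ∀ x ∈ S, ∀ y ∈ S, x ≠ y → (G ⊔ edge a b ⊔ edge c d).Adj x y := by
    intro x hx y hy hxy
    rw [hSm] at hx hy
    rw [sup_adj, sup_adj, edge_adj, edge_adj]
    rcases hx with rfl | rfl | rfl | rfl <;> rcases hy with rfl | rfl | rfl | rfl <;>
      simp_all [G.adj_comm]
  -- The forest with the diagonal `ab` added on one side is glued along `ab` to the other one.
  have glue : ∀ (a b c d : V) (L R M₁ P₁ Q₁ M₂ P₂ Q₂ : Set V), S = {a, b, c, d} → a ≠ b →
      PartSep G Set.univ S L R → PartSep (G ⊔ edge a b) (S ∪ L) M₁ P₁ Q₁ →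
      PartSep G (S ∪ R) M₂ P₂ Q₂ → a ∈ M₁ → b ∈ M₁ → c ∈ P₁ → d ∈ Q₁ →
      a ∈ M₂ → b ∈ M₂ → c ∈ P₂ → d ∈ Q₂ → ((G ⊔ edge a b).induce M₁).IsAcyclic →
      (G.induce M₂).IsAcyclic → False := by
    intro a b c d L R M₁ P₁ Q₁ M₂ P₂ Q₂ hSeq hab hsep hp₁ hp₂ ha₁ hb₁ hc₁ hd₁ ha₂ hb₂ hc₂ hd₂
      hψ₁ hψ₂
    obtain ⟨hcut, hint, hcross⟩ :=
      union_cut hSeq hsep (hp₁.anti le_sup_left) hp₂ ha₁ hb₁ ha₂ hb₂ hc₁ hc₂ hd₁ hd₂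
    have habH : (G ⊔ edge a b).Adj a b := by
      rw [sup_adj, edge_adj]
      exact Or.inr ⟨Or.inl ⟨rfl, rfl⟩, hab⟩
    exact hG.2.2.1 ⟨_, hcut, acyclic_glue le_sup_left habH hint hcross hψ₁ hψ₂⟩
  -- The part on `S ∪ L` cannot stay sparse after the addition of one edge.
  have main : ∀ L R : Set V, PartSep G Set.univ S L R → L.Nonempty → R.Nonempty →
      ¬ ((edgesIn G (S ∪ L)).ncard : ℝ) + 1 < α * (((S ∪ L).ncard : ℝ) - 4) + 6 := by
    intro L R hsep hL hR hlt
    have hspare : ∀ u v : V, Sparse α (G ⊔ edge u v) (S ∪ L) := fun u v => by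
      have : ((edgesIn (G ⊔ edge u v) (S ∪ L)).ncard : ℝ) ≤ (edgesIn G (S ∪ L)).ncard + 1 := by
        exact_mod_cast edgesIn_sup_edge_le G u v (S ∪ L)
      unfold Sparse
      linarith
    have hspR : Sparse α G (S ∪ R) := by
      by_contra h2
      have h1 := not_sparse_of_clique hF hβ hG (H := G ⊔ edge a b ⊔ edge c d)
        (le_sup_left.trans le_sup_left) hsep hL hR hS hclique
      have h3 := sum_lt hβ hG hsep
      have h4 : ((edgesIn (G ⊔ edge a b ⊔ edge c d) (S ∪ L)).ncard : ℝ)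
          ≤ (edgesIn G (S ∪ L)).ncard + 2 := by
        have h5 := edgesIn_sup_edge_le G a b (S ∪ L)
        have h6 := edgesIn_sup_edge_le (G ⊔ edge a b) c d (S ∪ L)
        exact_mod_cast (by omega : (edgesIn (G ⊔ edge a b ⊔ edge c d) (S ∪ L)).ncard
          ≤ (edgesIn G (S ∪ L)).ncard + 2)
      unfold Sparse at h1 h2
      have he' : ((edgesIn G S).ncard : ℝ) ≤ 4 := by exact_mod_cast he
      rw [hcard] at h3
      push_cast at h3
      linarith
    obtain ⟨M₂, P₂, Q₂, hp₂, hψ₂, hx₂, hy₂⟩ :=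
      exists_separating hF hβ hG le_rfl hsep.symm hR hL hS hspR
    rcases diagonal_of_sep hSeq hac had hbc hbd hp₂ hx₂ hy₂ with
      ⟨P₂, Q₂, hp₂, ha₂, hb₂, hc₂, hd₂⟩ | ⟨P₂, Q₂, hp₂, hc₂, hd₂, ha₂, hb₂⟩
    · obtain ⟨M₁, P₁, Q₁, hp₁, hψ₁, hx₁, hy₁⟩ :=
        exists_separating hF hβ hG le_sup_left hsep hL hR hS (hspare a b)
      have habH : (G ⊔ edge a b).Adj a b := by
        rw [sup_adj, edge_adj]
        exact Or.inr ⟨Or.inl ⟨rfl, rfl⟩, hab⟩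
      obtain ⟨P₁, Q₁, hp₁, ha₁, hb₁, hc₁, hd₁⟩ := separates_of_adj hSeq habH
        (Or.inl hac) (Or.inl had) (Or.inl hbc) (Or.inl hbd) hp₁ hx₁ hy₁
      exact glue a b c d L R M₁ P₁ Q₁ M₂ P₂ Q₂ hSeq hab hsep hp₁ hp₂ ha₁ hb₁ hc₁ hd₁
        ha₂ hb₂ hc₂ hd₂ hψ₁ hψ₂
    · obtain ⟨M₁, P₁, Q₁, hp₁, hψ₁, hx₁, hy₁⟩ :=
        exists_separating hF hβ hG le_sup_left hsep hL hR hS (hspare c d)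
      have hcdH : (G ⊔ edge c d).Adj c d := by
        rw [sup_adj, edge_adj]
        exact Or.inr ⟨Or.inl ⟨rfl, rfl⟩, hcd⟩
      have hSeq' : S = {c, d, a, b} := by
        ext v
        rw [hSm]
        simp only [Set.mem_insert_iff, Set.mem_singleton_iff]
        tauto
      obtain ⟨P₁, Q₁, hp₁, hc₁, hd₁, ha₁, hb₁⟩ := separates_of_adj hSeq' hcdH
        (Or.inl hac.symm) (Or.inl hbc.symm) (Or.inl had.symm) (Or.inl hbd.symm) hp₁ hx₁ hy₁
      exact glue c d a b L R M₁ P₁ Q₁ M₂ P₂ Q₂ hSeq' hcd hsep hp₁ hp₂ hc₁ hd₁ ha₁ hb₁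
        hc₂ hd₂ ha₂ hb₂ hψ₁ hψ₂
  have h1 := main L R hsep hL hR
  have h2 := main R L hsep.symm hR hL
  have h3 := sum_lt hβ hG hsep
  have he' : ((edgesIn G S).ncard : ℝ) ≤ 4 := by exact_mod_cast he
  rw [hcard] at h3
  push_cast at h3
  linarith

/-! ### Graphs on four vertices -/

theorem edgesIn_ncard_le {V : Type} {G : SimpleGraph V} {S : Set V} [DecidableEq V]
    (F : Finset (Sym2 V)) (n : ℕ) (hF : F.card ≤ n)
    (h : ∀ x ∈ S, ∀ y ∈ S, G.Adj x y → s(x, y) ∈ F) : (edgesIn G S).ncard ≤ n := by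
  refine le_trans ?_ hF
  rw [← Set.ncard_coe_finset]
  refine Set.ncard_le_ncard ?_ F.finite_toSet
  intro e
  induction e using Sym2.ind with
  | _ u v =>
    rintro ⟨he, hm⟩
    exact h u (hm u (by simp)) v (hm v (by simp)) he

/-- A graph on at most four vertices that is not a forest contains a triangle or a 4-cycle. -/
theorem triangle_or_cycle {V : Type} [Finite V] {G : SimpleGraph V} {S : Set V}
    (hcard : S.ncard ≤ 4) (h : ¬ (G.induce S).IsAcyclic) :
    (∃ a ∈ S, ∃ b ∈ S, ∃ c ∈ S, G.Adj a b ∧ G.Adj a c ∧ G.Adj b c) ∨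
    (∃ a ∈ S, ∃ b ∈ S, ∃ c ∈ S, ∃ d ∈ S, a ≠ b ∧ c ≠ d ∧
      G.Adj a c ∧ G.Adj a d ∧ G.Adj b c ∧ G.Adj b d) := by
  rw [isAcyclic_iff_free_cycleGraph] at h
  push Not at h
  obtain ⟨n, hn, hc⟩ := h
  obtain ⟨f⟩ := hc
  have hle : n ≤ 4 := by
    have := Nat.card_le_card_of_injective f f.injective
    rw [Nat.card_eq_fintype_card, Fintype.card_fin, Nat.card_coe_set_eq] at this
    omega
  have hadj : ∀ i j, (cycleGraph n).Adj i j → G.Adj (f i) (f j) := fun i j hij => by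
    simpa using f.toHom.map_adj hij
  have hinj : ∀ i j, i ≠ j → (f i : V) ≠ f j := fun i j hij h =>
    hij (f.injective (Subtype.ext h))
  obtain rfl | rfl : n = 3 ∨ n = 4 := by omega
  · exact Or.inl ⟨f 0, (f 0).2, f 1, (f 1).2, f 2, (f 2).2,
      hadj _ _ (by simp [cycleGraph_adj]), hadj _ _ (by simp [cycleGraph_adj]; decide),
      hadj _ _ (by simp [cycleGraph_adj])⟩
  · exact Or.inr ⟨f 0, (f 0).2, f 2, (f 2).2, f 1, (f 1).2, f 3, (f 3).2,
      hinj _ _ (by decide), hinj _ _ (by decide),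
      hadj _ _ (by simp [cycleGraph_adj]), hadj _ _ (by simp [cycleGraph_adj]; decide),
      hadj _ _ (by simp [cycleGraph_adj]),
      hadj _ _ (by simp [cycleGraph_adj])⟩

/-- A triangle `a b c` with a fourth vertex `d` adjacent to neither `a` nor `b` is `T0`
or `T1`. -/
theorem iso_T {V : Type} {G : SimpleGraph V} {a b c d : V} {S : Set V}
    (hSeq : S = {a, b, c, d}) (hda : d ≠ a) (hdb : d ≠ b) (hdc : d ≠ c)
    (hab : G.Adj a b) (hac : G.Adj a c) (hbc : G.Adj b c)
    (had : ¬ G.Adj a d) (hbd : ¬ G.Adj b d) :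
    Nonempty ((G.induce S) ≃g graphT0) ∨ Nonempty ((G.induce S) ≃g graphT1) := by
  have hSm : ∀ v, v ∈ S ↔ v = a ∨ v = b ∨ v = c ∨ v = d := fun v => by simp [hSeq]
  let f : Fin 4 → S := ![⟨a, (hSm a).2 (by simp)⟩, ⟨b, (hSm b).2 (by simp)⟩,
    ⟨c, (hSm c).2 (by simp)⟩, ⟨d, (hSm d).2 (by simp)⟩]
  have hf : Function.Bijective f := by
    constructor
    · have h1 := hab.ne
      have h2 := hac.ne
      have h3 := hbc.ne
      have h1' := h1.symm
      have h2' := h2.symm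
      have h3' := h3.symm
      have h4 := hda.symm
      have h5 := hdb.symm
      have h6 := hdc.symm
      intro i j hij
      have hij' : ![a, b, c, d] i = ![a, b, c, d] j := by
        have := congrArg Subtype.val hij
        fin_cases i <;> fin_cases j <;> exact this
      fin_cases i <;> fin_cases j <;> first | rfl | exact absurd hij' (by assumption)
    · rintro ⟨v, hv⟩
      rcases (hSm v).1 hv with rfl | rfl | rfl | rfl
      · exact ⟨0, rfl⟩
      · exact ⟨1, rfl⟩
      · exact ⟨2, rfl⟩
      · exact ⟨3, rfl⟩
  have h1 := hab.symm
  have h2 := hac.symm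
  have h3 := hbc.symm
  have h4 : ¬ G.Adj d a := fun h => had h.symm
  have h5 : ¬ G.Adj d b := fun h => hbd h.symm
  by_cases hcd : G.Adj c d
  · right
    have h6 := hcd.symm
    refine ⟨(RelIso.symm ⟨Equiv.ofBijective f hf, ?_⟩)⟩
    intro i j
    fin_cases i <;> fin_cases j <;> simp [f, graphT1, *]
  · left
    have h6 : ¬ G.Adj d c := fun h => hcd h.symm
    refine ⟨(RelIso.symm ⟨Equiv.ofBijective f hf, ?_⟩)⟩
    intro i j
    fin_cases i <;> fin_cases j <;> simp [f, graphT0, *]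

/-- Four vertices carrying a 4-cycle `a c b d` and at least one diagonal cannot be a cut. -/
theorem not_cycle_with_chord {Ψ : ∀ (W : Type), SimpleGraph W → Prop}
    (hΨ : Ψ = ForestClass ∨ Ψ = BipartiteClass)
    {α β : ℝ} (hα2 : α ≤ 3) (hβ : 4 * α - β = 6) {V : Type} [Finite V] {G : SimpleGraph V}
    (hG : MinCounterexample Ψ α β G) {a b c d : V} {S L R : Set V}
    (hsep : PartSep G Set.univ S L R) (hL : L.Nonempty) (hR : R.Nonempty)
    (hSeq : S = {a, b, c, d}) (hcard : S.ncard = 4) (hcd : c ≠ d)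
    (hab : G.Adj a b) (hac : G.Adj a c) (had : G.Adj a d)
    (hbc : G.Adj b c) (hbd : G.Adj b d) : False := by
  classical
  have hSm : ∀ v, v ∈ S ↔ v = a ∨ v = b ∨ v = c ∨ v = d := fun v => by simp [hSeq]
  by_cases hadj : G.Adj c d
  · refine not_clique hΨ hα2 hβ hG hsep hL hR (Or.inr ⟨hcard, ?_⟩) ?_
    · refine edgesIn_ncard_le {s(a, b), s(a, c), s(a, d), s(b, c), s(b, d), s(c, d)} 6
        Finset.card_le_six ?_
      intro x hx y hy hxy
      rw [hSm] at hx hy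
      rcases hx with rfl | rfl | rfl | rfl <;> rcases hy with rfl | rfl | rfl | rfl <;>
        first | exact absurd hxy (G.loopless.irrefl _) | simp [Sym2.eq_swap]
    · intro x hx y hy hxy
      rw [hSm] at hx hy
      rcases hx with rfl | rfl | rfl | rfl <;> rcases hy with rfl | rfl | rfl | rfl <;>
        first | exact absurd rfl hxy | assumption | (apply Adj.symm; assumption)
  · refine not_diamond hΨ hβ hG hsep hL hR hSeq hcard hcd hab hac had hbc hbd ?_
    have hadj' : ¬ G.Adj d c := fun h => hadj h.symm
    refine edgesIn_ncard_le {s(a, b), s(a, c), s(a, d), s(b, c), s(b, d)} 5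
      Finset.card_le_five ?_
    intro x hx y hy hxy
    rw [hSm] at hx hy
    rcases hx with rfl | rfl | rfl | rfl <;> rcases hy with rfl | rfl | rfl | rfl <;>
      first | exact absurd hxy (G.loopless.irrefl _) | exact absurd hxy hadj |
        exact absurd hxy hadj' | simp [Sym2.eq_swap]

/-- A cut of at most four vertices that contains a triangle is `T0` or `T1`. -/
theorem iso_of_triangle {Ψ : ∀ (W : Type), SimpleGraph W → Prop}
    (hΨ : Ψ = ForestClass ∨ Ψ = BipartiteClass)
    {α β : ℝ} (hα2 : α ≤ 3) (hβ : 4 * α - β = 6) {V : Type} [Finite V] {G : SimpleGraph V}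
    (hG : MinCounterexample Ψ α β G) {a b c : V} {S L R : Set V}
    (hsep : PartSep G Set.univ S L R) (hL : L.Nonempty) (hR : R.Nonempty)
    (hcard : S.ncard ≤ 4) (ha : a ∈ S) (hb : b ∈ S) (hc : c ∈ S)
    (hab : G.Adj a b) (hac : G.Adj a c) (hbc : G.Adj b c) :
    Nonempty ((G.induce S) ≃g graphT0) ∨ Nonempty ((G.induce S) ≃g graphT1) := by
  classical
  have h3 : ({a, b, c} : Set V).ncard = 3 :=
    Set.ncard_eq_three.2 ⟨a, b, c, hab.ne, hac.ne, hbc.ne, rfl⟩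
  have hsub : ({a, b, c} : Set V) ⊆ S := by
    rintro x (rfl | rfl | rfl) <;> assumption
  by_cases hS : S ⊆ {a, b, c}
  · have hSeq : S = {a, b, c} := hS.antisymm hsub
    have hSm : ∀ v, v ∈ S ↔ v = a ∨ v = b ∨ v = c := fun v => by simp [hSeq]
    exfalso
    refine not_clique hΨ hα2 hβ hG hsep hL hR (Or.inl ⟨by rw [hSeq, h3], ?_⟩) ?_
    · refine edgesIn_ncard_le {s(a, b), s(a, c), s(b, c)} 3 Finset.card_le_three ?_
      intro x hx y hy hxy
      rw [hSm] at hx hy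
      rcases hx with rfl | rfl | rfl <;> rcases hy with rfl | rfl | rfl <;>
        first | exact absurd hxy (G.loopless.irrefl _) | simp [Sym2.eq_swap]
    · intro x hx y hy hxy
      rw [hSm] at hx hy
      rcases hx with rfl | rfl | rfl <;> rcases hy with rfl | rfl | rfl <;>
        first | exact absurd rfl hxy | assumption | (apply Adj.symm; assumption)
  · obtain ⟨d, hdS, hd⟩ := Set.not_subset.1 hS
    simp only [Set.mem_insert_iff, Set.mem_singleton_iff, not_or] at hd
    obtain ⟨hda, hdb, hdc⟩ := hd
    have h4 : ({d, a, b, c} : Set V).ncard = 4 := by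
      rw [Set.ncard_insert_of_notMem (by simp [hda, hdb, hdc]), h3]
    have hSeq : S = {d, a, b, c} := by
      refine (Set.eq_of_subset_of_ncard_le ?_ (by omega)).symm
      exact Set.insert_subset hdS hsub
    have hS4 : S.ncard = 4 := by rw [hSeq, h4]
    have hSm : ∀ v, v ∈ S ↔ v = d ∨ v = a ∨ v = b ∨ v = c := fun v => by simp [hSeq]
    -- Two neighbours of `d` in the triangle give a 4-cycle with a chord.
    by_cases h1 : G.Adj a d <;> by_cases h2 : G.Adj b d
    · exact (not_cycle_with_chord hΨ hα2 hβ hG hsep hL hR (a := a) (b := b) (c := c) (d := d)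
        (by ext v; rw [hSm]; simp only [Set.mem_insert_iff, Set.mem_singleton_iff]; tauto)
        hS4 (Ne.symm hdc) hab hac h1 hbc h2).elim
    · by_cases h3 : G.Adj c d
      · exact (not_cycle_with_chord hΨ hα2 hβ hG hsep hL hR (a := a) (b := c) (c := b) (d := d)
          (by ext v; rw [hSm]; simp only [Set.mem_insert_iff, Set.mem_singleton_iff]; tauto)
          hS4 (Ne.symm hdb) hac hab h1 hbc.symm h3).elim
      · exact iso_T (a := b) (b := c) (c := a) (d := d)
          (by ext v; rw [hSm]; simp only [Set.mem_insert_iff, Set.mem_singleton_iff]; tauto)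
          hdb hdc hda hbc hab.symm hac.symm h2 h3
    · by_cases h3 : G.Adj c d
      · exact (not_cycle_with_chord hΨ hα2 hβ hG hsep hL hR (a := b) (b := c) (c := a) (d := d)
          (by ext v; rw [hSm]; simp only [Set.mem_insert_iff, Set.mem_singleton_iff]; tauto)
          hS4 (Ne.symm hda) hbc hab.symm h2 hac.symm h3).elim
      · exact iso_T (a := a) (b := c) (c := b) (d := d)
          (by ext v; rw [hSm]; simp only [Set.mem_insert_iff, Set.mem_singleton_iff]; tauto)
          hda hdc hdb hac hab hbc.symm h1 h3
    · exact iso_T (a := a) (b := b) (c := c) (d := d)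
        (by ext v; rw [hSm]; simp only [Set.mem_insert_iff, Set.mem_singleton_iff]; tauto)
        hda hdb hdc hab hac hbc h1 h2

/-! ### Cuts with at most four vertices -/

/-- in a minimal counterexample, any cut of size at most 4 induces `T0` or `T1`. -/
theorem stmt10 (Ψ : ∀ (W : Type), SimpleGraph W → Prop)
    (hΨ : Ψ = ForestClass ∨ Ψ = BipartiteClass)
    (α β : ℝ) (hα1 : 2 < α) (hα2 : α ≤ 3) (hβ : 4 * α - β = 6)
    {V : Type} [Fintype V] (G : SimpleGraph V) (hG : MinCounterexample Ψ α β G)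
    (S : Set V) (hS : IsVertexCut G S) (hcard : S.ncard ≤ 4) :
    Nonempty ((G.induce S) ≃g graphT0) ∨ Nonempty ((G.induce S) ≃g graphT1) := by
  classical
  have hnot : ¬ Ψ S (G.induce S) := fun h => hG.2.2.1 ⟨S, hS, h⟩
  obtain ⟨L, R, hL, hR, hLR, hU, hn⟩ := hS
  have hmem : ∀ v, v ∈ L ∨ v ∈ R ↔ v ∉ S := fun v => by
    rw [← Set.mem_union, hU, Set.mem_compl_iff]
  have hsep : PartSep G Set.univ S L R :=
    ⟨fun v => by have := hmem v; simp only [Set.mem_univ, true_iff]; tauto,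
      fun v hv h => (hmem v).1 (Or.inl h) hv, fun v hv h => (hmem v).1 (Or.inr h) hv,
      fun v h1 h2 => Set.disjoint_left.1 hLR h1 h2, hn⟩
  have hacyc : ¬ (G.induce S).IsAcyclic := by
    rcases hΨ with rfl | rfl
    · exact hnot
    · exact fun h => hnot h.colorable_two
  rcases triangle_or_cycle hcard hacyc with
    ⟨a, ha, b, hb, c, hc, hab, hac, hbc⟩ | ⟨a, ha, b, hb, c, hc, d, hd, nab, ncd, hac, had, hbc, hbd⟩
  · exact iso_of_triangle hΨ hα2 hβ hG hsep hL hR hcard ha hb hc hab hac hbc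
  by_cases hab : G.Adj a b
  · exact iso_of_triangle hΨ hα2 hβ hG hsep hL hR hcard ha hb hc hab hac hbc
  by_cases hcd : G.Adj c d
  · exact iso_of_triangle hΨ hα2 hβ hG hsep hL hR hcard ha hc hd hac had hcd
  -- What remains is an induced 4-cycle, which is bipartite.
  exfalso
  have h4 : ({a, b, c, d} : Set V).ncard = 4 :=
    Set.ncard_eq_four.2 ⟨a, b, c, d, nab, hac.ne, had.ne, hbc.ne, hbd.ne, ncd, rfl⟩
  have hSeq : S = {a, b, c, d} := by
    refine (Set.eq_of_subset_of_ncard_le ?_ (by omega)).symm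
    rintro x (rfl | rfl | rfl | rfl) <;> assumption
  have hSm : ∀ v, v ∈ S ↔ v = a ∨ v = b ∨ v = c ∨ v = d := fun v => by simp [hSeq]
  have hba : ¬ G.Adj b a := fun h => hab h.symm
  have hdc : ¬ G.Adj d c := fun h => hcd h.symm
  rcases hΨ with rfl | rfl
  · refine not_cycle hβ hG hsep hL hR hSeq (by rw [hSeq, h4]) nab ncd hac had hbc hbd ?_
    refine edgesIn_ncard_le {s(a, c), s(a, d), s(b, c), s(b, d)} 4 Finset.card_le_four ?_
    intro x hx y hy hxy
    rw [hSm] at hx hy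
    rcases hx with rfl | rfl | rfl | rfl <;> rcases hy with rfl | rfl | rfl | rfl <;>
      first | exact absurd hxy (G.loopless.irrefl _) | exact absurd hxy hab |
        exact absurd hxy hba | exact absurd hxy hcd | exact absurd hxy hdc | simp [Sym2.eq_swap]
  · refine hnot ((colorable_two_iff G S).2 ⟨{a, b}, ?_⟩)
    have e1 := hac.ne'
    have e2 := had.ne'
    have e3 := hbc.ne'
    have e4 := hbd.ne'
    intro x hx y hy hxy
    rw [hSm] at hx hy
    rcases hx with rfl | rfl | rfl | rfl <;> rcases hy with rfl | rfl | rfl | rfl <;>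
      first | exact absurd hxy (G.loopless.irrefl _) | exact absurd hxy hab |
        exact absurd hxy hba | exact absurd hxy hcd | exact absurd hxy hdc |
        simp [e1, e2, e3, e4]
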